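/- arXiv:1011.3062 — 3 statements merged into one kernel-verified Lean document; each statement's English description precedes it below -/
import Mathlib

section
/- Fix i ∈ A and o_i ∈ ℝ, and define the offer profile O by: for every i' ∈ A, O_{i'} = max over all paths P from i to i' in S of f^P_{i,i'}(o_i) (with O_i = o_i), and for every j ∈ B, O_j = max over i' ∈ Nbr(j) of v_j(i', O_{i'}). Then for every edge (i',j) ∈ E, either (i',j) ∈ EQ(O), or every path from i to i' in EQ(O) contains at least one node of Nbr^{EQ(O)}(j), the set of neighbors of j in the equality subgraph EQ(O). -/
open Classical

variable {V : Type*}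

namespace GSM

/-- Symmetric adjacency induced by a set of (directed A→B) edges. -/
def Adj (E : Finset (V × V)) (a b : V) : Prop := (a, b) ∈ E ∨ (b, a) ∈ E

/-- A path from `k` to `k'`: a nonempty list of distinct nodes starting at `k`,
ending at `k'`, with consecutive nodes adjacent. -/
def IsPath (E : Finset (V × V)) (p : List V) (k k' : V) : Prop :=
  p.head? = some k ∧ p.getLast? = some k' ∧ p.Nodup ∧ p.Chain' (Adj E)

/-- The offer induced at the end of a path, starting from offer `x` at its head:
`O_{x_0} = x` and `O_{x_{n+1}} = v_{x_{n+1}}(x_n, O_{x_n})`. -/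
def pathOffer (v : V → V → ℝ → ℝ) : List V → ℝ → ℝ
  | [], x => x
  | [_], x => x
  | a :: b :: rest, x => pathOffer v (b :: rest) (v b a x)

/-- The equality subgraph of an offer profile: edges `(i,j) ∈ E` with `O j = v j i (O i)`. -/
noncomputable def EQg (E : Finset (V × V)) (v : V → V → ℝ → ℝ) (O : V → ℝ) : Finset (V × V) :=
  E.filter fun e => O e.2 = v e.2 e.1 (O e.1)

/-- Stability of an offer profile: for every edge `(i,j) ∈ E`, `O j ≥ v j i (O i)`. -/
def Stable (E : Finset (V × V)) (v : V → V → ℝ → ℝ) (O : V → ℝ) : Prop :=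
  ∀ e ∈ E, v e.2 e.1 (O e.1) ≤ O e.2

/-- A matching: no two distinct edges share a node. -/
def IsMatching (M : Finset (V × V)) : Prop :=
  ∀ e ∈ M, ∀ e' ∈ M, e ≠ e' → e.1 ≠ e'.1 ∧ e.1 ≠ e'.2 ∧ e.2 ≠ e'.1 ∧ e.2 ≠ e'.2

/-- A node is matched if it lies on an edge of the matching. -/
def Matched (M : Finset (V × V)) (x : V) : Prop := ∃ e ∈ M, e.1 = x ∨ e.2 = x

/-- A near-perfect matching relative to the node set `X`: exactly one node of `X` is unmatched. -/
def NearPerfect (M : Finset (V × V)) (X : Finset V) : Prop :=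
  ∃! x, x ∈ X ∧ ¬ Matched M x

/-- Undirected membership of an edge in an edge set. -/
def SymMem (M : Finset (V × V)) (e : V × V) : Prop := e ∈ M ∨ e.swap ∈ M

/-- A list of nodes is alternating for the matching `M`: consecutive edges alternate
between edges of `M` and non-edges of `M`. -/
def IsAlternating (M : Finset (V × V)) (p : List V) : Prop :=
  List.Chain' (fun e e' => SymMem M e ↔ ¬ SymMem M e') (p.zip p.tail)

/-- `T` is a tree on the node set `X`: all its edges join nodes of `X` and any two
nodes of `X` are joined by a unique path in `T`. -/
def IsTreeOn (T : Finset (V × V)) (X : Finset V) : Prop :=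
  (∀ e ∈ T, e.1 ∈ X ∧ e.2 ∈ X) ∧ ∀ x ∈ X, ∀ y ∈ X, ∃! p : List V, IsPath T p x y

/-- Degree of a node: number of incident edges of `T`. -/
noncomputable def degr (T : Finset (V × V)) (x : V) : ℕ :=
  (T.filter fun e => e.1 = x ∨ e.2 = x).card

/-- An alternating tree on node set `X` for the matching `M`, rooted at `r`:
a tree containing exactly one unmatched node `r`, in which every path from `r`
is an alternating path, every node at odd distance from `r` has degree 2, and
every leaf is at even distance from `r`. -/
def IsAltTreeOn (T M : Finset (V × V)) (r : V) (X : Finset V) : Prop :=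
  IsTreeOn T X ∧ r ∈ X ∧ ¬ Matched M r ∧ (∀ x ∈ X, x ≠ r → Matched M x) ∧
  (∀ x ∈ X, ∀ p : List V, IsPath T p r x → IsAlternating M p) ∧
  (∀ x ∈ X, ∀ p : List V, IsPath T p r x →
    (Odd (p.length - 1) → degr T x = 2) ∧ (degr T x = 1 → Even (p.length - 1)))

/-- A stable alternating spanning tree generating offer profile: a stable offer profile
whose equality subgraph contains a near-perfect matching together with an associated
alternating spanning tree. -/
def SASTG (A B : Finset V) (E : Finset (V × V)) (v : V → V → ℝ → ℝ) (O : V → ℝ) : Prop :=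
  Stable E v O ∧
  ∃ M T r, IsMatching M ∧ M ⊆ EQg E v O ∧ NearPerfect M (A ∪ B) ∧
    T ⊆ EQg E v O ∧ IsAltTreeOn T M r (A ∪ B)

/-- `y` is a child of `x` in the tree `T` rooted at `r`: there is a path from `r`
to `y` in `T` whose second-to-last node is `x`. -/
def IsChild (T : Finset (V × V)) (r x y : V) : Prop :=
  ∃ p : List V, IsPath T p r y ∧ p.dropLast.getLast? = some x

/-- A node reachable by an alternating path from some unmatched node of `A`. -/
def AltReach (G M : Finset (V × V)) (A : Finset V) (x : V) : Prop :=
  ∃ i ∈ A, ¬ Matched M i ∧ ∃ p : List V, IsPath G p i x ∧ IsAlternating M p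

/-!
Suppose `(i', j) ∈ E` is not an equality edge, so that `v j i' (O i') < O j`, and let `k` be a
neighbor of `j` at which `O j` is attained. If an equality path from `i` to `i'` avoided all
equality neighbors of `j`, it would avoid `j` as well, since the node after `j` would be such a
neighbor, so it could be prolonged to a path `i, …, i', j, k`. Offers along an equality path agree
with `O`, so this path offers `v k j (v j i' (O i')) > v k j (O j) = O k` to `k`, against the
maximality of `O k`.
-/

section Paths

variable {E G : Finset (V × V)} {A B : Finset V} {a b k k' x : V} {p : List V}

lemma Adj.symm (h : Adj E a b) : Adj E b a := Or.symm h

lemma Adj.mono (hGE : G ⊆ E) (h : Adj G a b) : Adj E a b :=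
  h.imp (@hGE _) (@hGE _)

lemma Adj.mem_of_right_mem (hdisj : Disjoint A B) (hE : E ⊆ A ×ˢ B) (hb : b ∈ B)
    (h : Adj E a b) : (a, b) ∈ E :=
  h.resolve_right fun hba =>
    Finset.disjoint_left.mp hdisj (Finset.mem_product.mp (hE hba)).1 hb

lemma IsPath.mono (hGE : G ⊆ E) (hp : IsPath G p k k') : IsPath E p k k' :=
  ⟨hp.1, hp.2.1, hp.2.2.1, hp.2.2.2.imp fun _ _ => Adj.mono hGE⟩

lemma IsPath.concat (hp : IsPath E p k a) (hab : Adj E a b) (hb : b ∉ p) :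
    IsPath E (p ++ [b]) k b := by
  obtain ⟨hhead, hlast, hnodup, hchain⟩ := hp
  refine ⟨by simp [hhead], by simp, by simpa using hnodup.concat hb, ?_⟩
  refine hchain.append (List.isChain_singleton b) ?_
  simpa [hlast] using hab

lemma IsPath.exists_adj_of_mem (hp : IsPath E p k k') (hx : x ∈ p) (hne : x ≠ k') :
    ∃ y ∈ p, Adj E x y := by
  obtain ⟨-, hlast, -, hchain⟩ := hp
  obtain ⟨l, r, rfl⟩ := List.append_of_mem hx
  cases r with
  | nil => exact absurd (by simpa using hlast) hne
  | cons y r => exact ⟨y, by simp, (List.isChain_cons_cons.mp hchain.right_of_append).1⟩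

lemma IsPath.exists_mem_edge_of_mem (hdisj : Disjoint A B) (hE : E ⊆ A ×ˢ B)
    (hp : IsPath E p k k') (hk' : k' ∈ A) (hb : b ∈ B) (hbp : b ∈ p) :
    ∃ a ∈ p, (a, b) ∈ E :=
  have ⟨a, hap, hba⟩ := hp.exists_adj_of_mem hbp (Finset.disjoint_iff_ne.mp hdisj k' hk' b hb).symm
  ⟨a, hap, hba.symm.mem_of_right_mem hdisj hE hb⟩

end Paths

section Offers

variable {E : Finset (V × V)} {v : V → V → ℝ → ℝ} {O : V → ℝ} {a b : V} {p : List V}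

lemma pathOffer_concat (ha : p.getLast? = some a) (b : V) (x : ℝ) :
    pathOffer v (p ++ [b]) x = v b a (pathOffer v p x) := by
  fun_induction pathOffer v p x with
  | case1 => simp at ha
  | case2 c x => simp_all [pathOffer]
  | case3 c d l x ih => simpa [pathOffer] using ih (by simpa using ha)

lemma pathOffer_eq_of_isChain (hp : p.IsChain fun a b => O b = v b a (O a))
    (ha : p.head? = some a) (hb : p.getLast? = some b) : pathOffer v p (O a) = O b := by
  induction p generalizing a with
  | nil => simp at ha
  | cons c l ih =>
    obtain rfl : c = a := by simpa using ha
    cases l with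
    | nil =>
      obtain rfl : c = b := by simpa using hb
      rfl
    | cons d l =>
      obtain ⟨hcd, hchain⟩ := List.isChain_cons_cons.mp hp
      rw [pathOffer, ← hcd]
      exact ih hchain rfl (by simpa using hb)

lemma mem_EQg : (a, b) ∈ EQg E v O ↔ (a, b) ∈ E ∧ O b = v b a (O a) :=
  Finset.mem_filter

lemma EQg_subset : EQg E v O ⊆ E :=
  Finset.filter_subset _ _

lemma offer_eq_of_adj_EQg (hinv : ∀ e ∈ E, Function.LeftInverse (v e.1 e.2) (v e.2 e.1))
    (h : Adj (EQg E v O) a b) : O b = v b a (O a) := by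
  rcases h with hab | hba
  · exact (mem_EQg.mp hab).2
  · obtain ⟨hE, hO⟩ := mem_EQg.mp hba
    rw [hO, hinv _ hE]

lemma pathOffer_eq_of_isPath_EQg
    (hinv : ∀ e ∈ E, Function.LeftInverse (v e.1 e.2) (v e.2 e.1))
    (hp : IsPath (EQg E v O) p a b) : pathOffer v p (O a) = O b :=
  pathOffer_eq_of_isChain (hp.2.2.2.imp fun _ _ => offer_eq_of_adj_EQg hinv) hp.1 hp.2.1

end Offers

theorem paths_blocked_by_eq_neighbors_general {A B : Finset V} {E : Finset (V × V)}
    {v : V → V → ℝ → ℝ} {O : V → ℝ} {i : V}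
    (hdisj : Disjoint A B) (hE : E ⊆ A ×ˢ B)
    (hanti : ∀ e ∈ E, StrictAnti (v e.1 e.2))
    (hinv : ∀ e ∈ E, Function.LeftInverse (v e.1 e.2) (v e.2 e.1))
    (hOA : ∀ i' ∈ A, ∀ P, IsPath E P i i' → pathOffer v P (O i) ≤ O i')
    (hOB : ∀ j ∈ B, (∃ i', (i', j) ∈ E ∧ O j = v j i' (O i')) ∧
      ∀ i', (i', j) ∈ E → v j i' (O i') ≤ O j)
    {i' j : V} (hij : (i', j) ∈ E) :
    (i', j) ∈ EQg E v O ∨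
      ∀ p, IsPath (EQg E v O) p i i' → ∃ k ∈ p, (k, j) ∈ EQg E v O := by
  refine or_iff_not_imp_left.mpr fun hne p hp => ?_
  by_contra! havoid
  obtain ⟨hi'A, hjB⟩ := Finset.mem_product.mp (hE hij)
  obtain ⟨⟨k, hkj, hOj⟩, hmax⟩ := hOB j hjB
  obtain ⟨hkA, -⟩ := Finset.mem_product.mp (hE hkj)
  have hkjEQ : (k, j) ∈ EQg E v O := mem_EQg.mpr ⟨hkj, hOj⟩
  have hlt : v j i' (O i') < O j :=
    (hmax i' hij).lt_of_ne fun h => hne (mem_EQg.mpr ⟨hij, h.symm⟩)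
  have hj : j ∉ p := fun hjp =>
    have ⟨a, hap, haj⟩ :=
      hp.exists_mem_edge_of_mem hdisj (EQg_subset.trans hE) hi'A hjB hjp
    havoid a hap haj
  have hk : k ∉ p ++ [j] := by
    have hkp : k ∉ p := fun hkp => havoid k hkp hkjEQ
    simpa using ⟨hkp, Finset.disjoint_iff_ne.mp hdisj k hkA j hjB⟩
  have hpath : IsPath E ((p ++ [j]) ++ [k]) i k :=
    ((hp.mono EQg_subset).concat (.inl hij) hj).concat (.inr hkj) hk
  refine lt_irrefl (O k) ?_
  calc
    O k = v k j (O j) := offer_eq_of_adj_EQg hinv (.inr hkjEQ)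
    _ < v k j (v j i' (O i')) := hanti _ hkj hlt
    _ = pathOffer v ((p ++ [j]) ++ [k]) (O i) := by
      rw [pathOffer_concat (List.getLast?_concat ..), pathOffer_concat hp.2.1,
        pathOffer_eq_of_isPath_EQg hinv hp]
    _ ≤ O k := hOA k hkA _ hpath

/-- for the offer profile generated by maximum offer inducing paths from `i`,
every edge `(i',j)` is either in the equality subgraph, or every path from `i` to `i'`
inside the equality subgraph passes through a neighbor of `j` in the equality subgraph. -/
theorem paths_blocked_by_eq_neighbors [DecidableEq V]
    (A B : Finset V) (E : Finset (V × V))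
    (hdisj : Disjoint A B) (hA : A.Nonempty) (hB : B.Nonempty)
    (hE : E ⊆ A ×ˢ B)
    (hconn : ∀ x ∈ A ∪ B, ∀ y ∈ A ∪ B, ∃ p : List V, IsPath E p x y)
    (v : V → V → ℝ → ℝ)
    (hvC : ∀ e ∈ E, Continuous (v e.2 e.1) ∧ Continuous (v e.1 e.2))
    (hvA : ∀ e ∈ E, StrictAnti (v e.2 e.1) ∧ StrictAnti (v e.1 e.2))
    (hvInv : ∀ e ∈ E, (∀ x, v e.1 e.2 (v e.2 e.1 x) = x) ∧ (∀ x, v e.2 e.1 (v e.1 e.2 x) = x))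
    (i : V) (hi : i ∈ A) (o : ℝ) (O : V → ℝ) (hOi : O i = o)
    (hOA : ∀ i' ∈ A, (∃ P : List V, IsPath E P i i' ∧ pathOffer v P o = O i') ∧
      ∀ P : List V, IsPath E P i i' → pathOffer v P o ≤ O i')
    (hOB : ∀ j ∈ B, (∃ i', (i', j) ∈ E ∧ O j = v j i' (O i')) ∧
      ∀ i', (i', j) ∈ E → v j i' (O i') ≤ O j)
 :
    ∀ i' j : V, (i', j) ∈ E →
      ((i', j) ∈ EQg E v O ∨
        ∀ p : List V, IsPath (EQg E v O) p i i' → ∃ k ∈ p, (k, j) ∈ EQg E v O) := by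
  subst hOi
  exact fun _ _ => paths_blocked_by_eq_neighbors_general hdisj hE (fun e he => (hvA e he).2)
    (fun e he => (hvInv e he).1) (fun i' hi' => (hOA i' hi').2) hOB

end GSM
end

section
/- Let A and B be finite disjoint sets with |A| − |B| = 1, let O be an offer profile, and suppose the equality subgraph EQ(O) is connected. If there exists a rooted tree T contained in EQ(O) such that no node j ∈ B is a leaf of T and every node j ∈ B has exactly one child in T, then EQ(O) contains a near-perfect matching. -/
/-!
Match every node of `B` with its child in the tree. Edges join `A` to `B`, so the child lies in
`A`; and a node of a rooted tree has only one parent, so distinct nodes of `B` have distinct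
children. All of `B` is thus matched with `|B|` nodes of `A`, and `|A| - |B| = 1` node is left over.
-/

open Classical

variable {V : Type*}

namespace GSM

section RootedPaths

variable {T : Finset (V × V)} {r x x' y : V}

theorem IsChild.adj (h : IsChild T r x y) : Adj T x y := by
  obtain ⟨p, ⟨-, hlast, -, hchain⟩, hparent⟩ := h
  obtain ⟨q, rfl⟩ := List.getLast?_eq_some_iff.1 hlast
  rw [List.dropLast_concat] at hparent
  exact (List.isChain_append.1 hchain).2.2 x hparent y rfl

theorem IsChild.parent_unique (hy : {p | IsPath T p r y}.Subsingleton)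
    (h : IsChild T r x y) (h' : IsChild T r x' y) : x = x' := by
  obtain ⟨p, hp, hx⟩ := h
  obtain ⟨q, hq, hx'⟩ := h'
  rw [hy hp hq] at hx
  exact Option.some_injective _ (hx.symm.trans hx')

theorem IsPath.eq_or_exists_isChild {p : List V} (hp : IsPath T p r y) :
    y = r ∨ ∃ x, IsChild T r x y := by
  obtain ⟨q, rfl⟩ := List.getLast?_eq_some_iff.1 hp.2.1
  rcases List.eq_nil_or_concat q with rfl | ⟨q, x, rfl⟩
  · exact .inl (Option.some_injective _ hp.1)
  · exact .inr ⟨x, _, hp, by simp⟩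

theorem IsPath.end_mem {X : Finset V} {p : List V} (hT : ∀ e ∈ T, e.1 ∈ X ∧ e.2 ∈ X)
    (hr : r ∈ X) (hp : IsPath T p r y) : y ∈ X := by
  obtain rfl | ⟨x, hx⟩ := hp.eq_or_exists_isChild
  · exact hr
  · exact hx.adj.elim (fun h => (hT _ h).2) (fun h => (hT _ h).1)

theorem IsTreeOn.subsingleton_isPath {X : Finset V} (hT : IsTreeOn T X) (hr : r ∈ X) (y : V) :
    {p | IsPath T p r y}.Subsingleton := fun _ hp _ hq =>
  (hT.2 r hr y (hp.end_mem hT.1 hr)).unique hp hq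

theorem Adj.mem_of_right {A B : Finset V} (hdisj : Disjoint A B) (hT : T ⊆ A ×ˢ B)
    (hx : x ∈ B) (h : Adj T x y) : (y, x) ∈ T :=
  h.resolve_left fun hxy =>
    Finset.disjoint_left.1 hdisj (Finset.mem_product.1 (hT hxy)).1 hx

end RootedPaths

section Assignment

/-- The edges joining each node `j` of `B` to the partner `c j` assigned to it, written
`(c j, j)` since edges are directed towards `B`. -/
def assignment (B : Finset V) (c : V → V) : Finset (V × V) :=
  B.map ⟨fun j => (c j, j), fun _ _ h => congrArg Prod.snd h⟩

variable {A B : Finset V} {c : V → V}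

theorem mem_assignment {e : V × V} : e ∈ assignment B c ↔ ∃ j ∈ B, (c j, j) = e :=
  Finset.mem_map

theorem assignment_subset_iff {T : Finset (V × V)} :
    assignment B c ⊆ T ↔ ∀ j ∈ B, (c j, j) ∈ T :=
  Finset.forall_mem_map

theorem matched_assignment {x : V} :
    Matched (assignment B c) x ↔ (∃ j ∈ B, c j = x) ∨ x ∈ B := by
  simp [Matched, mem_assignment, and_or_left, exists_or]

theorem isMatching_assignment (hinj : Set.InjOn c B) (hcB : ∀ j ∈ B, c j ∉ B) :
    IsMatching (assignment B c) := by
  intro e he e' he' hne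
  obtain ⟨j, hj, rfl⟩ := mem_assignment.1 he
  obtain ⟨k, hk, rfl⟩ := mem_assignment.1 he'
  have hjk : j ≠ k := fun h => hne (by rw [h])
  exact ⟨hinj.ne hj hk hjk, (ne_of_mem_of_not_mem hk (hcB j hj)).symm,
    ne_of_mem_of_not_mem hj (hcB k hk), hjk⟩

theorem mem_union_and_not_matched_assignment [DecidableEq V] (hdisj : Disjoint A B) {x : V} :
    x ∈ A ∪ B ∧ ¬ Matched (assignment B c) x ↔ x ∈ A ∧ x ∉ B.image c := by
  have hAB : x ∈ A → x ∉ B := fun hx => Finset.disjoint_left.1 hdisj hx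
  rw [matched_assignment, Finset.mem_union, Finset.mem_image]
  grind

theorem nearPerfect_assignment [DecidableEq V] (hdisj : Disjoint A B) (hinj : Set.InjOn c B)
    (hcA : Set.MapsTo c B A) (hcard : A.card = B.card + 1) :
    NearPerfect (assignment B c) (A ∪ B) :=
  (existsUnique_congr fun _ => mem_union_and_not_matched_assignment hdisj).2
    (Finset.existsUnique_notMem_image_of_injOn_of_card_eq_add_one hinj hcA hcard)

end Assignment

theorem near_perfect_matching_of_tree_general [DecidableEq V] {A B : Finset V}
    {T : Finset (V × V)} {r : V} (hdisj : Disjoint A B) (hcard : A.card = B.card + 1)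
    (hT : T ⊆ A ×ˢ B) (hpath : ∀ y, {p | IsPath T p r y}.Subsingleton)
    (hchild : ∀ j ∈ B, ∃ y, IsChild T r j y) :
    ∃ M : Finset (V × V), IsMatching M ∧ M ⊆ T ∧ NearPerfect M (A ∪ B) := by
  choose! c hc using hchild
  have hcT : ∀ j ∈ B, (c j, j) ∈ T := fun j hj => (hc j hj).adj.mem_of_right hdisj hT hj
  have hcA : Set.MapsTo c B A := fun j hj => (Finset.mem_product.1 (hT (hcT j hj))).1
  have hinj : Set.InjOn c B := fun j hj k hk hjk =>
    (hc j hj).parent_unique (hpath _) (hjk ▸ hc k hk)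
  have hcB : ∀ j ∈ B, c j ∉ B := fun j hj => Finset.disjoint_left.1 hdisj (hcA hj)
  exact ⟨assignment B c, isMatching_assignment hinj hcB, assignment_subset_iff.2 hcT,
    nearPerfect_assignment hdisj hinj hcA hcard⟩

/-- if `|A| = |B| + 1`, the equality subgraph is connected, and it contains a
rooted tree in which no node of `B` is a leaf and every node of `B` has exactly one child,
then the equality subgraph contains a near-perfect matching. -/
theorem near_perfect_matching_of_tree [Fintype V] [DecidableEq V]
    (A B : Finset V) (E : Finset (V × V))
    (hdisj : Disjoint A B) (hA : A.Nonempty) (hB : B.Nonempty)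
    (hE : E ⊆ A ×ˢ B)
    (hconn : ∀ x ∈ A ∪ B, ∀ y ∈ A ∪ B, ∃ p : List V, IsPath E p x y)
    (v : V → V → ℝ → ℝ)
    (hvC : ∀ e ∈ E, Continuous (v e.2 e.1) ∧ Continuous (v e.1 e.2))
    (hvA : ∀ e ∈ E, StrictAnti (v e.2 e.1) ∧ StrictAnti (v e.1 e.2))
    (hvInv : ∀ e ∈ E, (∀ x, v e.1 e.2 (v e.2 e.1 x) = x) ∧ (∀ x, v e.2 e.1 (v e.1 e.2 x) = x))
    (hcard : A.card = B.card + 1)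
    (O : V → ℝ)
    (hconnEQ : ∀ x ∈ A ∪ B, ∀ y ∈ A ∪ B, ∃ p : List V, IsPath (EQg E v O) p x y)
    (T : Finset (V × V)) (X : Finset V) (r : V)
    (hTE : T ⊆ EQg E v O) (hXsub : X ⊆ A ∪ B) (hrX : r ∈ X) (hBX : B ⊆ X)
    (hTree : IsTreeOn T X)
    (hleaf : ∀ j ∈ B, degr T j ≠ 1)
    (hchild : ∀ j ∈ B, ∃! y, IsChild T r j y) :
    ∃ M : Finset (V × V), IsMatching M ∧ M ⊆ EQg E v O ∧ NearPerfect M (A ∪ B) := by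
  have hTAB : T ⊆ A ×ˢ B := hTE.trans ((Finset.filter_subset _ _).trans hE)
  obtain ⟨M, hM, hMT, hnear⟩ := near_perfect_matching_of_tree_general hdisj hcard hTAB
    (hTree.subsingleton_isPath hrX) fun j hj => (hchild j hj).exists
  exact ⟨M, hM, hMT.trans hTE, hnear⟩

end GSM
end

section
/- Let O be a stable offer profile, and let A^T ⊆ A, B^T ⊆ B with X^T = A^T ∪ B^T. Let O' be an offer profile such that: (a) O'_k = O_k for every node k ∉ X^T; (b) the restriction of O' to X^T is a stable offer profile for the induced subgraph S|_{X^T}; (c) O'_{j'} ≥ O_{j'} for every j' ∈ B^T; (d) for every i' ∈ A^T and every j' ∈ B ∖ B^T with (i',j') ∈ E, O'_{i'} ≥ v_{i'}(j', O_{j'}). Then O' is a stable offer profile for S. -/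
open Classical

variable {V : Type*}

namespace GSM

/-!
An edge can become unstable only if one of its offers falls, and offers fall only on `AT`. An edge
from `AT` to `BT` lies in the induced subgraph. On an edge from `AT` to `B \ BT` the new offer of
the `AT` end is at least its outside option, and stability may be tested from either end of an
edge, because the pareto payoff functions of its two ends form an antitone Galois connection.
-/

section General

variable {α : Type*} [Preorder α]

/-- Stability of an offer profile, as in `Stable`, for a possibly infinite edge set and offers in a
preorder; the edge set of an induced subgraph is written as an intersection `E ∩ X ×ˢ X`. -/
def IsStableOn (E : Set (V × V)) (v : V → V → α → α) (O : V → α) : Prop :=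
  ∀ e ∈ E, v e.2 e.1 (O e.1) ≤ O e.2

/-- The compatibility of pareto payoff functions on an edge set: those of the two ends of an edge
form an antitone Galois connection, so that stability reads the same from either end. It is encoded
as a Galois connection out of the order dual. -/
def IsParetoPayoff (E : Set (V × V)) (v : V → V → α → α) : Prop :=
  ∀ e ∈ E, GaloisConnection (v e.2 e.1 ∘ OrderDual.ofDual) (OrderDual.toDual ∘ v e.1 e.2)

variable {E : Set (V × V)} {v : V → V → α → α} {O Op : V → α}

namespace IsParetoPayoff

theorem of_antitone_of_inverse
    (hanti : ∀ e ∈ E, Antitone (v e.2 e.1) ∧ Antitone (v e.1 e.2))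
    (hinv : ∀ e ∈ E, Function.LeftInverse (v e.1 e.2) (v e.2 e.1) ∧
      Function.RightInverse (v e.1 e.2) (v e.2 e.1)) :
    IsParetoPayoff E v := fun e he =>
  GaloisConnection.monotone_intro (hanti e he).2.dual_right (hanti e he).1.dual_left
    (fun x => ((hinv e he).1 x).le) (fun y => ((hinv e he).2 y).le)

variable {i j : V} {x x' y y' : α}

theorem le_iff (hv : IsParetoPayoff E v) (he : (i, j) ∈ E) : v j i x ≤ y ↔ v i j y ≤ x :=
  hv (i, j) he (OrderDual.toDual x) y

theorem antitone (hv : IsParetoPayoff E v) (he : (i, j) ∈ E) : Antitone (v j i) :=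
  fun _ _ hx => (hv (i, j) he).monotone_l hx

theorem le_of_le_of_le (hv : IsParetoPayoff E v) (he : (i, j) ∈ E) (h : v j i x ≤ y)
    (hx : x ≤ x') (hy : y ≤ y') : v j i x' ≤ y' :=
  calc
    v j i x' ≤ v j i x := hv.antitone he hx
    _ ≤ y := h
    _ ≤ y' := hy

end IsParetoPayoff

theorem stability_of_updated_profile_general {A B AT BT : Set V}
    (hdisj : Disjoint A B) (hE : E ⊆ A ×ˢ B) (hv : IsParetoPayoff E v) (hO : IsStableOn E v O)
    (hAT : AT ⊆ A)
    (ha : ∀ k ∈ A ∪ B, k ∉ AT ∪ BT → O k ≤ Op k)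
    (hb : IsStableOn (E ∩ (AT ∪ BT) ×ˢ (AT ∪ BT)) v Op)
    (hc : ∀ j ∈ BT, O j ≤ Op j)
    (hd : ∀ i ∈ AT, ∀ j ∈ B, j ∉ BT → (i, j) ∈ E → v i j (O j) ≤ Op i) :
    IsStableOn E v Op := by
  have le_off_AT : ∀ k ∈ A ∪ B, k ∉ AT → O k ≤ Op k := fun k hk hkAT => by
    by_cases hkBT : k ∈ BT
    · exact hc k hkBT
    · exact ha k hk (not_or.2 ⟨hkAT, hkBT⟩)
  rintro ⟨i, j⟩ he
  obtain ⟨hi, hj⟩ : i ∈ A ∧ j ∈ B := hE he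
  have hj_le : O j ≤ Op j :=
    le_off_AT j (.inr hj) fun hjAT => hdisj.notMem_of_mem_left (hAT hjAT) hj
  by_cases hiAT : i ∈ AT
  · by_cases hjBT : j ∈ BT
    · exact hb (i, j) ⟨he, .inl hiAT, .inr hjBT⟩
    · exact ((hv.le_iff he).2 (hd i hiAT j hj hjBT he)).trans hj_le
  · exact hv.le_of_le_of_le he (hO (i, j) he) (le_off_AT i (.inl hi) hiAT) hj_le

end General

/-- updating a stable offer profile on a subset `X^T = A^T ∪ B^T` by a profile
that is stable on the induced subgraph, does not decrease offers on `B^T`, and dominates the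
outside options of `A^T`, yields a stable offer profile on all of `S`. -/
theorem stability_of_updated_profile [DecidableEq V]
    (A B : Finset V) (E : Finset (V × V))
    (hdisj : Disjoint A B) (hA : A.Nonempty) (hB : B.Nonempty)
    (hE : E ⊆ A ×ˢ B)
    (hconn : ∀ x ∈ A ∪ B, ∀ y ∈ A ∪ B, ∃ p : List V, IsPath E p x y)
    (v : V → V → ℝ → ℝ)
    (hvC : ∀ e ∈ E, Continuous (v e.2 e.1) ∧ Continuous (v e.1 e.2))
    (hvA : ∀ e ∈ E, StrictAnti (v e.2 e.1) ∧ StrictAnti (v e.1 e.2))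
    (hvInv : ∀ e ∈ E, (∀ x, v e.1 e.2 (v e.2 e.1 x) = x) ∧ (∀ x, v e.2 e.1 (v e.1 e.2 x) = x))
    (O Op : V → ℝ) (hO : Stable E v O)
    (AT BT : Finset V) (hAT : AT ⊆ A) (hBT : BT ⊆ B)
    (ha : ∀ k ∈ A ∪ B, k ∉ AT ∪ BT → Op k = O k)
    (hb : ∀ e ∈ E, e.1 ∈ AT ∪ BT → e.2 ∈ AT ∪ BT → v e.2 e.1 (Op e.1) ≤ Op e.2)
    (hc : ∀ j' ∈ BT, O j' ≤ Op j')
    (hd : ∀ i' ∈ AT, ∀ j' ∈ B, j' ∉ BT → (i', j') ∈ E → v i' j' (O j') ≤ Op i') :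
    Stable E v Op := by
  have hv : IsParetoPayoff (E : Set (V × V)) v := .of_antitone_of_inverse
    (fun e he => (hvA e he).imp StrictAnti.antitone StrictAnti.antitone) hvInv
  exact stability_of_updated_profile_general (A := A) (B := B) (AT := AT) (BT := BT)
    (mod_cast hdisj) (mod_cast hE) hv hO hAT
    (fun k hk hkT => (ha k (Finset.mem_union.2 hk) (mod_cast hkT)).ge)
    (fun e he => hb e he.1 (mod_cast he.2.1) (mod_cast he.2.2)) hc hd

end GSM
end
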